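/- arXiv:1907.00778 — 3 statements merged into one kernel-verified Lean document; each statement's English description precedes it below -/
import Mathlib

section
/- Let α_h ∈ (0,2], C_h ∈ [1,∞) and θ_h ∈ (0,∞]. (i) If h(r) ≤ C_h λ^{α_h} h(λr) for all λ ≤ 1 and 0 < r < θ_h, then there is a constant c > 0, depending only on α_h and C_h, such that h(r) ≤ c K(r) for all 0 < r < θ_h. (ii) Conversely, if there is c > 0 such that h(r) ≤ c K(r) for all 0 < r < θ_h, then h(r) ≤ λ^{2/c} h(λr) for all λ ≤ 1 and 0 < r < θ_h (i.e. (A1) holds with exponent 2/c and constant 1). -/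
/-!
Comparing the integrands pointwise for `0 < s ≤ r` gives the two-sided increment bound
`(1 - s² / r²) K(s) ≤ h(s) - h(r) ≤ (r² / s² - 1) K(r)`
(`increment_lower`, `increment_upper`), a derivative-free form of `h' = -2 K / r`.

If `h` has weak lower scaling, choose `λ` with `C λ ^ α = 1/2`. Then `2 h(r) ≤ h(λ r)`, so the upper
increment bound with `s = λ r` yields `h(r) ≤ (λ⁻² - 1) K(r)`.

Conversely, if `h ≤ c K`, the lower increment bound gives
`h(r) ≤ (1 - (1 - s² / r²) / c) h(s) ≤ exp (-(1 - s² / r²) / c) h(s)`.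
Passing from `λ r` to `r` along `n` geometric steps of ratio `exp ε`, with `ε = -log λ / n`, yields
`h(r) ≤ exp (-n (1 - exp (-2 ε)) / c) h(λ r)`, and the factor tends to `λ ^ (2 / c)` as `n → ∞`.
-/

open MeasureTheory Filter Set
open scoped RealInnerProductSpace ENNReal Topology

noncomputable section

abbrev Ed (d : ℕ) := EuclideanSpace ℝ (Fin d)

/-- The concentration function `h`. -/
def concFn (d : ℕ) (A : Ed d →L[ℝ] Ed d) (ν : Measure (Ed d)) (r : ℝ) : ℝ :=
  ‖A‖ / r ^ 2 + ∫ z, min 1 (‖z‖ ^ 2 / r ^ 2) ∂ν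

/-- The function `K`. -/
def KFn (d : ℕ) (A : Ed d →L[ℝ] Ed d) (ν : Measure (Ed d)) (r : ℝ) : ℝ :=
  ‖A‖ / r ^ 2 + (∫ z in {z : Ed d | ‖z‖ < r}, ‖z‖ ^ 2 ∂ν) / r ^ 2

/-- Context hypotheses on the pair `(A, ν)`. -/
structure IsLevyPair (d : ℕ) (A : Ed d →L[ℝ] Ed d) (ν : Measure (Ed d)) : Prop where
  symm : ∀ x y : Ed d, ⟪A x, y⟫ = ⟪x, A y⟫
  nonneg : ∀ x : Ed d, 0 ≤ ⟪x, A x⟫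
  nu_zero : ν ({0} : Set (Ed d)) = 0
  nu_int : Integrable (fun z : Ed d => min 1 (‖z‖ ^ 2)) ν
  h_lim : Tendsto (concFn d A ν) (𝓝[>] (0 : ℝ)) atTop

/-- `g` is the (two-sided) inverse of `f` on `(0,∞)`. -/
structure IsInvOn (f g : ℝ → ℝ) : Prop where
  pos : ∀ u : ℝ, 0 < u → 0 < g u
  right_inv : ∀ u : ℝ, 0 < u → f (g u) = u
  left_inv : ∀ r : ℝ, 0 < r → g (f r) = r

/-- Real part of the characteristic exponent. -/
def rePsi (d : ℕ) (A : Ed d →L[ℝ] Ed d) (ν : Measure (Ed d)) (x : Ed d) : ℝ :=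
  ⟪x, A x⟫ + ∫ z, (1 - Real.cos ⟪x, z⟫) ∂ν

/-- The radial non-decreasing majorant ψ*. -/
def psiStar (d : ℕ) (A : Ed d →L[ℝ] Ed d) (ν : Measure (Ed d)) (r : ℝ) : ℝ :=
  sSup (rePsi d A ν '' Metric.closedBall 0 r)

/-- Condition (C3). -/
def CondC3 (d : ℕ) (A : Ed d →L[ℝ] Ed d) (ν : Measure (Ed d)) (T : ℝ≥0∞) (c α : ℝ) :
    Prop :=
  (∀ x : Ed d, 1 / T < ENNReal.ofReal ‖x‖ → c * psiStar d A ν ‖x‖ ≤ rePsi d A ν x) ∧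
    ∀ lam r : ℝ, 1 ≤ lam → 0 < r → 1 / T < ENNReal.ofReal r →
      c * lam ^ α * psiStar d A ν r ≤ psiStar d A ν (lam * r)

/-- Condition (A1): weak lower scaling of `h` at zero. -/
def ScalA1 (h : ℝ → ℝ) (α C : ℝ) (θ : ℝ≥0∞) : Prop :=
  ∀ lam r : ℝ, 0 < lam → lam ≤ 1 → 0 < r → ENNReal.ofReal r < θ →
    h r ≤ C * lam ^ α * h (lam * r)

/-- The shifted drift `b_r`. -/
def bshift (d : ℕ) (ν : Measure (Ed d)) (b : Ed d) (r : ℝ) : Ed d :=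
  b + ∫ z, (Set.indicator {w : Ed d | ‖w‖ < r} (fun w => w) z
      - Set.indicator {w : Ed d | ‖w‖ < 1} (fun w => w) z) ∂ν

/-- The characteristic exponent of the triplet `(A, ν, b)`. -/
def psiFn (d : ℕ) (A : Ed d →L[ℝ] Ed d) (ν : Measure (Ed d)) (b : Ed d) (x : Ed d) : ℂ :=
  ((⟪x, A x⟫ : ℝ) : ℂ) - Complex.I * ((⟪x, b⟫ : ℝ) : ℂ) -
    ∫ z, (Complex.exp (Complex.I * ((⟪x, z⟫ : ℝ) : ℂ)) - 1 -
      Complex.I * ((⟪x, z⟫ : ℝ) : ℂ)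
        * Set.indicator {w : Ed d | ‖w‖ < 1} (fun _ => (1 : ℂ)) z) ∂ν

/-- The transition density, defined by Fourier inversion. -/
def pdens (d : ℕ) (A : Ed d →L[ℝ] Ed d) (ν : Measure (Ed d)) (b : Ed d)
    (t : ℝ) (x : Ed d) : ℝ :=
  ((2 * Real.pi) ^ d)⁻¹ *
    (∫ z : Ed d, Complex.exp (-(Complex.I * ((⟪x, z⟫ : ℝ) : ℂ))
        - (t : ℂ) * psiFn d A ν b z)).re

section Concentration

variable {d : ℕ} {A : Ed d →L[ℝ] Ed d} {ν : Measure (Ed d)}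

lemma integrable_conc (hL : IsLevyPair d A ν) {r : ℝ} (hr : 0 < r) :
    Integrable (fun z : Ed d => min 1 (‖z‖ ^ 2 / r ^ 2)) ν := by
  refine (hL.nu_int.const_mul (max 1 (1 / r ^ 2))).mono' (by fun_prop) ?_
  refine Eventually.of_forall fun z => ?_
  have h0 : 0 ≤ min 1 (‖z‖ ^ 2 / r ^ 2) := by positivity
  rw [Real.norm_of_nonneg h0]
  have hm1 : (1 : ℝ) ≤ max 1 (1 / r ^ 2) := le_max_left _ _
  have hm2 : 1 / r ^ 2 ≤ max 1 (1 / r ^ 2) := le_max_right _ _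
  rcases le_total 1 (‖z‖ ^ 2) with hz | hz
  · rw [min_eq_left hz]
    exact (min_le_left _ _).trans (by linarith)
  · rw [min_eq_right hz]
    refine (min_le_right _ _).trans ?_
    rw [div_eq_mul_one_div, mul_comm]
    gcongr

lemma measurableSet_ball' (r : ℝ) : MeasurableSet {z : Ed d | ‖z‖ < r} :=
  measurableSet_lt measurable_norm measurable_const

lemma integrable_trunc (hL : IsLevyPair d A ν) {r : ℝ} (hr : 0 < r) :
    Integrable ({z : Ed d | ‖z‖ < r}.indicator fun z => ‖z‖ ^ 2 / r ^ 2) ν := by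
  refine (integrable_conc hL hr).mono' ?_ ?_
  · refine Measurable.aestronglyMeasurable ?_
    exact Measurable.indicator (by fun_prop) (measurableSet_ball' r)
  · refine Eventually.of_forall fun z => ?_
    by_cases hz : ‖z‖ < r
    · rw [indicator_of_mem (by exact hz), Real.norm_of_nonneg (by positivity), min_eq_right]
      rw [div_le_one (by positivity)]
      gcongr
    · rw [indicator_of_notMem (by exact hz), norm_zero]
      positivity

lemma KFn_eq (r : ℝ) :
    KFn d A ν r =
      ‖A‖ / r ^ 2 + ∫ z, {z : Ed d | ‖z‖ < r}.indicator (fun z => ‖z‖ ^ 2 / r ^ 2) z ∂ν := by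
  rw [KFn, integral_indicator (measurableSet_ball' r), integral_div]

lemma concFn_nonneg (r : ℝ) : 0 ≤ concFn d A ν r :=
  add_nonneg (by positivity) (integral_nonneg fun z => by positivity)

/-- The integrand of `h` does not change between `s` and `r` where `‖z‖ ≥ r`, and where `‖z‖ < r`
it grows by at most `‖z‖² / s² - ‖z‖² / r²`. -/
lemma increment_upper (hL : IsLevyPair d A ν) {s r : ℝ} (hs : 0 < s) (hsr : s ≤ r) :
    concFn d A ν s - concFn d A ν r ≤ ((r / s) ^ 2 - 1) * KFn d A ν r := by
  have hr : 0 < r := hs.trans_le hsr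
  have key : ∫ z, min 1 (‖z‖ ^ 2 / s ^ 2) ∂ν - ∫ z, min 1 (‖z‖ ^ 2 / r ^ 2) ∂ν ≤
      ((r / s) ^ 2 - 1) *
        ∫ z, {z : Ed d | ‖z‖ < r}.indicator (fun z => ‖z‖ ^ 2 / r ^ 2) z ∂ν := by
    rw [← integral_sub (integrable_conc hL hs) (integrable_conc hL hr), ← integral_const_mul]
    refine integral_mono ((integrable_conc hL hs).sub (integrable_conc hL hr))
      ((integrable_trunc hL hr).const_mul _) fun z => ?_
    dsimp only
    by_cases hz : ‖z‖ < r
    · rw [indicator_of_mem (by exact hz)]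
      have h1 : min 1 (‖z‖ ^ 2 / r ^ 2) = ‖z‖ ^ 2 / r ^ 2 := by
        rw [min_eq_right]
        rw [div_le_one (by positivity)]
        gcongr
      have h2 : ((r / s) ^ 2 - 1) * (‖z‖ ^ 2 / r ^ 2) = ‖z‖ ^ 2 / s ^ 2 - ‖z‖ ^ 2 / r ^ 2 := by
        field_simp
      rw [h1, h2]
      gcongr
      exact min_le_right _ _
    · rw [indicator_of_notMem (by exact hz)]
      push Not at hz
      have h1 : min 1 (‖z‖ ^ 2 / r ^ 2) = 1 := by
        rw [min_eq_left]
        rw [one_le_div (by positivity)]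
        gcongr
      rw [h1, mul_zero, sub_nonpos]
      exact min_le_left _ _
  have hA : ‖A‖ / s ^ 2 - ‖A‖ / r ^ 2 = ((r / s) ^ 2 - 1) * (‖A‖ / r ^ 2) := by
    field_simp
  rw [KFn_eq, mul_add, concFn, concFn]
  linarith

/-- Only the region `‖z‖ < s`, on which both integrands are quadratic, is used for the bound;
elsewhere the integrand of `h` is merely monotone in the radius. -/
lemma increment_lower (hL : IsLevyPair d A ν) {s r : ℝ} (hs : 0 < s) (hsr : s ≤ r) :
    (1 - (s / r) ^ 2) * KFn d A ν s ≤ concFn d A ν s - concFn d A ν r := by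
  have hr : 0 < r := hs.trans_le hsr
  have key : (1 - (s / r) ^ 2) *
        ∫ z, {z : Ed d | ‖z‖ < s}.indicator (fun z => ‖z‖ ^ 2 / s ^ 2) z ∂ν ≤
      ∫ z, min 1 (‖z‖ ^ 2 / s ^ 2) ∂ν - ∫ z, min 1 (‖z‖ ^ 2 / r ^ 2) ∂ν := by
    rw [← integral_sub (integrable_conc hL hs) (integrable_conc hL hr), ← integral_const_mul]
    refine integral_mono ((integrable_trunc hL hs).const_mul _)
      ((integrable_conc hL hs).sub (integrable_conc hL hr)) fun z => ?_
    dsimp only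
    by_cases hz : ‖z‖ < s
    · rw [indicator_of_mem (by exact hz)]
      have h1 : min 1 (‖z‖ ^ 2 / s ^ 2) = ‖z‖ ^ 2 / s ^ 2 := by
        rw [min_eq_right]
        rw [div_le_one (by positivity)]
        gcongr
      have h2 : (1 - (s / r) ^ 2) * (‖z‖ ^ 2 / s ^ 2) = ‖z‖ ^ 2 / s ^ 2 - ‖z‖ ^ 2 / r ^ 2 := by
        field_simp
      rw [h1, h2]
      gcongr
      exact min_le_right _ _
    · rw [indicator_of_notMem (by exact hz), mul_zero, sub_nonneg]
      gcongr
  have hA : ‖A‖ / s ^ 2 - ‖A‖ / r ^ 2 = (1 - (s / r) ^ 2) * (‖A‖ / s ^ 2) := by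
    field_simp
  rw [KFn_eq, mul_add, concFn, concFn]
  linarith

/-- One step of the decay of `h`: the ratio of the two radii is `exp ε`. -/
lemma concFn_step (hL : IsLevyPair d A ν) {c s ε : ℝ} (hc : 0 < c) (hs : 0 < s) (hε : 0 ≤ ε)
    (hK : concFn d A ν s ≤ c * KFn d A ν s) :
    concFn d A ν (s * Real.exp ε) ≤
      Real.exp (-(1 - Real.exp (-2 * ε)) / c) * concFn d A ν s := by
  have h1 := increment_lower hL hs (le_mul_of_one_le_right hs.le (Real.one_le_exp hε))
  have h2 : (s / (s * Real.exp ε)) ^ 2 = Real.exp (-2 * ε) := by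
    rw [div_mul_cancel_left₀ hs.ne', ← Real.exp_neg, ← Real.exp_nat_mul]
    congr 1
    push_cast
    ring
  rw [h2] at h1
  set q := 1 - Real.exp (-2 * ε) with hq
  have hq0 : 0 ≤ q := sub_nonneg.2 (Real.exp_le_one_iff.2 (by linarith))
  have h3 : q / c * concFn d A ν s ≤ q * KFn d A ν s := by
    calc q / c * concFn d A ν s ≤ q / c * (c * KFn d A ν s) := by gcongr
      _ = q * KFn d A ν s := by field_simp
  have h4 : -q / c + 1 ≤ Real.exp (-q / c) := Real.add_one_le_exp _
  calc concFn d A ν (s * Real.exp ε) ≤ (-q / c + 1) * concFn d A ν s := by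
        rw [neg_div]
        linarith
    _ ≤ _ := mul_le_mul_of_nonneg_right h4 (concFn_nonneg s)

lemma concFn_iterate (hL : IsLevyPair d A ν) {c s ε : ℝ} (hc : 0 < c) (hs : 0 < s) (hε : 0 ≤ ε)
    (n : ℕ) (hK : ∀ u, 0 < u → u ≤ s * Real.exp (n * ε) → concFn d A ν u ≤ c * KFn d A ν u) :
    concFn d A ν (s * Real.exp (n * ε)) ≤
      Real.exp (n * (-(1 - Real.exp (-2 * ε)) / c)) * concFn d A ν s := by
  induction n with
  | zero => simp
  | succ n ih =>
    have hle : s * Real.exp (n * ε) ≤ s * Real.exp ((n + 1 : ℕ) * ε) := by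
      push_cast
      gcongr
      linarith
    have h1 := ih fun u hu hus => hK u hu (hus.trans hle)
    have h2 := concFn_step hL hc (by positivity) hε (hK (s * Real.exp (n * ε)) (by positivity) hle)
    have e1 : s * Real.exp ((n + 1 : ℕ) * ε) = s * Real.exp (n * ε) * Real.exp ε := by
      rw [mul_assoc, ← Real.exp_add]
      push_cast
      ring_nf
    rw [e1]
    refine h2.trans ((mul_le_mul_of_nonneg_left h1 (Real.exp_nonneg _)).trans_eq ?_)
    rw [← mul_assoc, ← Real.exp_add]
    push_cast
    ring_nf

/-- `1 - exp (-x)` lies above `x / (1 + x)`, which makes the limit over the step number explicit. -/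
lemma div_one_add_le (x : ℝ) (hx : 0 ≤ x) : x / (1 + x) ≤ 1 - Real.exp (-x) := by
  have h : Real.exp (-x) ≤ 1 / (1 + x) := by
    rw [Real.exp_neg, one_div]
    gcongr
    linarith [Real.add_one_le_exp x]
  have e : x / (1 + x) = 1 - 1 / (1 + x) := by
    field_simp
    ring
  linarith

lemma concFn_decay (hL : IsLevyPair d A ν) {c s L : ℝ} (hc : 0 < c) (hs : 0 < s) (hLn : 0 ≤ L)
    (hK : ∀ u, 0 < u → u ≤ s * Real.exp L → concFn d A ν u ≤ c * KFn d A ν u) :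
    concFn d A ν (s * Real.exp L) ≤ Real.exp (-(2 * L) / c) * concFn d A ν s := by
  have hlim : Tendsto (fun n : ℕ => Real.exp (-(2 * L / (1 + 2 * L / (n : ℝ))) / c) *
      concFn d A ν s) atTop (𝓝 (Real.exp (-(2 * L / (1 + 0)) / c) * concFn d A ν s)) := by
    refine Tendsto.mul_const _ ((Real.continuous_exp.tendsto _).comp ?_)
    refine Tendsto.div_const (Tendsto.neg (Tendsto.div tendsto_const_nhds ?_ (by norm_num))) _
    exact tendsto_const_nhds.add (tendsto_const_div_atTop_nhds_zero_nat (2 * L))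
  rw [add_zero, div_one] at hlim
  refine ge_of_tendsto hlim ((eventually_gt_atTop 0).mono fun n hn => ?_)
  have hn' : (0 : ℝ) < n := by exact_mod_cast hn
  have e : (n : ℝ) * (L / n) = L := by field_simp
  have h1 := concFn_iterate hL hc hs (div_nonneg hLn hn'.le) n (by rwa [e])
  rw [e] at h1
  refine h1.trans (mul_le_mul_of_nonneg_right (Real.exp_le_exp.2 ?_) (concFn_nonneg s))
  have h2 := div_one_add_le (2 * L / n) (by positivity)
  have h3 : 2 * L / (1 + 2 * L / (n : ℝ)) ≤ n * (1 - Real.exp (-(2 * L / n))) := by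
    calc 2 * L / (1 + 2 * L / (n : ℝ)) = n * (2 * L / n / (1 + 2 * L / n)) := by field_simp
      _ ≤ _ := by gcongr
  have e2 : -2 * (L / n) = -(2 * L / n) := by ring
  rw [e2, ← mul_div_assoc, mul_neg]
  gcongr

end Concentration

theorem stmt_2 (αh Ch : ℝ) (hα : 0 < αh ∧ αh ≤ 2) (hC : 1 ≤ Ch) :
    (∃ c : ℝ, 0 < c ∧
      ∀ (d : ℕ), 1 ≤ d → ∀ (A : Ed d →L[ℝ] Ed d) (ν : Measure (Ed d)) (θh : ℝ≥0∞),
        IsLevyPair d A ν → 0 < θh → ScalA1 (concFn d A ν) αh Ch θh →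
        ∀ r : ℝ, 0 < r → ENNReal.ofReal r < θh →
          concFn d A ν r ≤ c * KFn d A ν r) ∧
    (∀ (d : ℕ), 1 ≤ d → ∀ (A : Ed d →L[ℝ] Ed d) (ν : Measure (Ed d)) (θh : ℝ≥0∞),
      IsLevyPair d A ν → 0 < θh →
      ∀ c : ℝ, 0 < c →
        (∀ r : ℝ, 0 < r → ENNReal.ofReal r < θh →
          concFn d A ν r ≤ c * KFn d A ν r) →
        ScalA1 (concFn d A ν) (2 / c) 1 θh) := by
  refine ⟨?_, ?_⟩
  -- The scale `l` solves `Ch * l ^ αh = 1 / 2`, so that weak scaling gives `2 * h r ≤ h (l * r)`.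
  · set l : ℝ := (1 / (2 * Ch)) ^ (1 / αh) with hl
    have hC0 : 0 < Ch := by linarith
    have hl0 : 0 < l := by positivity
    have hl1 : l < 1 := by
      refine Real.rpow_lt_one (by positivity) ?_ (one_div_pos.2 hα.1)
      rw [div_lt_one (by positivity)]
      linarith
    have hlα : Ch * l ^ αh = 1 / 2 := by
      rw [hl, ← Real.rpow_mul (by positivity), one_div_mul_cancel hα.1.ne', Real.rpow_one]
      field_simp
    refine ⟨(1 / l) ^ 2 - 1, ?_, ?_⟩
    · have := one_lt_one_div hl0 hl1
      nlinarith
    · intro d _ A ν θh hL _ hS r hr hrθ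
      have h1 := hS l r hl0 hl1.le hr hrθ
      rw [hlα] at h1
      have h2 := increment_upper hL (mul_pos hl0 hr) (mul_le_of_le_one_left hr.le hl1.le)
      have e : r / (l * r) = 1 / l := by field_simp
      rw [e] at h2
      linarith
  · intro d _ A ν θh hL _ c hc hK l r hl0 hl1 hr hrθ
    have e : l * r * Real.exp (-Real.log l) = r := by
      rw [Real.exp_neg, Real.exp_log hl0]
      field_simp
    have h := concFn_decay hL (L := -Real.log l) hc (mul_pos hl0 hr)
      (neg_nonneg.2 (Real.log_nonpos hl0.le hl1)) fun u hu hur =>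
        hK u hu ((ENNReal.ofReal_le_ofReal (hur.trans_eq e)).trans_lt hrθ)
    rw [e] at h
    rw [one_mul, Real.rpow_def_of_pos hl0]
    convert h using 3
    ring

end
end

section
/- Suppose A = 0 and that there are α_h ∈ [1,2], C_h ∈ [1,∞) and θ_h ∈ (0,∞] such that h(r) ≤ C_h λ^{α_h} h(λr) for all λ ≤ 1 and 0 < r < θ_h. Then ∫_{|z|<1} |z| ν(dz) = ∞. -/
/-!
Suppose `∫_{‖z‖<1} ‖z‖ ν(dz) < ∞`. As `A = 0`, `r h(r) = ∫ r min(1, ‖z‖²/r²) ν(dz)`. For `0 < r ≤ 1`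
the integrand is at most `r`, so it vanishes pointwise as `r → 0+`, and it is dominated by the
`ν`-integrable function `‖z‖ 1_{‖z‖<1} + min(1, ‖z‖²)`. Dominated convergence gives `r h(r) → 0`
(`tendsto_mul_concFn`). On the other hand, `λ ^ αh ≤ λ` for `λ ≤ 1`, because `αh ≥ 1`, so the scaling
condition yields `r h(r) ≤ Ch (λ r) h(λ r)` for every `λ ≤ 1`. Letting `λ → 0+` forces `h(r) ≤ 0` for
all small `r`, which contradicts `h(r) → ∞`.
-/

open MeasureTheory Filter Set
open scoped RealInnerProductSpace ENNReal Topology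

noncomputable section

/-- The `r`-independent bound, at `t = ‖z‖`, that serves as dominating function for `r h(r)`. -/
lemma mul_min_one_sq_div_le {r t : ℝ} (hr : 0 < r) (hr1 : r ≤ 1) (ht : 0 ≤ t) :
    r * min 1 (t ^ 2 / r ^ 2) ≤ Set.indicator {s : ℝ | s < 1} id t + min 1 (t ^ 2) := by
  have hmin : 0 ≤ min 1 (t ^ 2) := by positivity
  by_cases h1 : t < 1
  · have hind : Set.indicator {s : ℝ | s < 1} id t = t :=
      Set.indicator_of_mem (s := {s : ℝ | s < 1}) h1 _
    rw [hind]
    rcases le_total r t with h | h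
    · have := mul_le_mul_of_nonneg_left (min_le_left 1 (t ^ 2 / r ^ 2)) hr.le
      linarith
    · have h2 := mul_le_mul_of_nonneg_left (min_le_right 1 (t ^ 2 / r ^ 2)) hr.le
      have h3 : r * (t ^ 2 / r ^ 2) ≤ t := by
        have : r * (t ^ 2 / r ^ 2) = t ^ 2 / r := by field_simp
        rw [this, div_le_iff₀ hr]
        nlinarith
      linarith
  · have hind : Set.indicator {s : ℝ | s < 1} id t = 0 :=
      Set.indicator_of_notMem (s := {s : ℝ | s < 1}) h1 _
    have h2 : min 1 (t ^ 2) = 1 := min_eq_left (by nlinarith)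
    have := mul_le_mul_of_nonneg_left (min_le_left 1 (t ^ 2 / r ^ 2)) hr.le
    rw [hind, h2]
    linarith

/-- A Lévy measure with finite first moment near the origin has `r h(r) → 0` as `r → 0+`. -/
lemma tendsto_mul_concFn (d : ℕ) (ν : Measure (Ed d))
    (hν : Integrable (fun z : Ed d => min 1 (‖z‖ ^ 2)) ν)
    (hfin : ∫⁻ z in {z : Ed d | ‖z‖ < 1}, ENNReal.ofReal ‖z‖ ∂ν ≠ ⊤) :
    Tendsto (fun r : ℝ => r * concFn d 0 ν r) (𝓝[>] 0) (𝓝 0) := by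
  have hms : MeasurableSet {z : Ed d | ‖z‖ < 1} := measurableSet_lt measurable_norm measurable_const
  have hint : Integrable (Set.indicator {z : Ed d | ‖z‖ < 1} fun z => ‖z‖) ν := by
    rw [integrable_indicator_iff hms]
    refine ⟨measurable_norm.aestronglyMeasurable, ?_⟩
    rw [hasFiniteIntegral_iff_ofReal (ae_of_all _ fun z => norm_nonneg z)]
    exact hfin.lt_top
  have hpos : ∀ᶠ r : ℝ in 𝓝[>] 0, 0 < r ∧ r ≤ 1 := by
    filter_upwards [Ioc_mem_nhdsGT (zero_lt_one' ℝ)] with r hr using hr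
  have key : Tendsto (fun r : ℝ => ∫ z : Ed d, r * min 1 (‖z‖ ^ 2 / r ^ 2) ∂ν) (𝓝[>] 0)
      (𝓝 (∫ _ : Ed d, (0 : ℝ) ∂ν)) := by
    refine tendsto_integral_filter_of_dominated_convergence _ ?_ ?_ (hint.add hν) ?_
    · exact Eventually.of_forall fun r =>
        (by fun_prop : Measurable fun z : Ed d => r * min 1 (‖z‖ ^ 2 / r ^ 2)).aestronglyMeasurable
    · filter_upwards [hpos] with r hr
      refine ae_of_all _ fun z => ?_
      have h0 : 0 ≤ r * min 1 (‖z‖ ^ 2 / r ^ 2) := mul_nonneg hr.1.le (by positivity)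
      rw [Real.norm_of_nonneg h0]
      exact mul_min_one_sq_div_le hr.1 hr.2 (norm_nonneg z)
    · refine ae_of_all _ fun z => ?_
      refine squeeze_zero' (g := fun r : ℝ => r) ?_ ?_ (tendsto_id.mono_left nhdsWithin_le_nhds)
      · filter_upwards [hpos] with r hr
        exact mul_nonneg hr.1.le (by positivity)
      · filter_upwards [hpos] with r hr
        exact mul_le_of_le_one_right hr.1.le (min_le_left _ _)
  simpa [concFn, integral_const_mul] using key

theorem stmt_5 (d : ℕ) (hd : 1 ≤ d) (A : Ed d →L[ℝ] Ed d) (ν : Measure (Ed d))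
    (hpair : IsLevyPair d A ν) (hA : A = 0)
    (αh Ch : ℝ) (θh : ℝ≥0∞) (hα : 1 ≤ αh ∧ αh ≤ 2) (hC : 1 ≤ Ch) (hθ : 0 < θh)
    (hscal : ScalA1 (concFn d A ν) αh Ch θh) :
    ∫⁻ z in {z : Ed d | ‖z‖ < 1}, ENNReal.ofReal ‖z‖ ∂ν = ⊤ := by
  subst hA
  by_contra hfin
  have hlim := tendsto_mul_concFn d ν hpair.nu_int hfin
  have hsmall : ∀ᶠ r : ℝ in 𝓝[>] 0, ENNReal.ofReal r < θh := by
    have : Tendsto ENNReal.ofReal (𝓝[>] 0) (𝓝 0) := by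
      simpa using (ENNReal.continuous_ofReal.tendsto 0).mono_left nhdsWithin_le_nhds
    exact this.eventually_lt_const hθ
  obtain ⟨r, hr0, hrθ, hr1⟩ := ((eventually_mem_nhdsWithin (a := (0 : ℝ)) (s := Ioi 0)).and
    (hsmall.and (hpair.h_lim.eventually_ge_atTop 1))).exists
  have hr0 : 0 < r := hr0
  -- The scaling condition with `λ = s / r`, in the form `r h(r) ≤ Ch s h(s)`.
  have hle : ∀ᶠ s : ℝ in 𝓝[>] 0, r * concFn d 0 ν r ≤ Ch * (s * concFn d 0 ν s) := by
    filter_upwards [Ioc_mem_nhdsGT hr0] with s hs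
    have hl0 : 0 < s / r := div_pos hs.1 hr0
    have hl1 : s / r ≤ 1 := (div_le_one hr0).2 hs.2
    have h1 := hscal (s / r) r hl0 hl1 hr0 hrθ
    rw [div_mul_cancel₀ s hr0.ne'] at h1
    have h2 : (s / r) ^ αh ≤ s / r := by
      simpa using Real.rpow_le_rpow_of_exponent_ge hl0 hl1 hα.1
    have h3 : 0 ≤ concFn d 0 ν s :=
      add_nonneg (by positivity) (integral_nonneg fun z => by positivity)
    have h4 : concFn d 0 ν r ≤ Ch * (s / r) * concFn d 0 ν s := h1.trans (by gcongr)
    calc r * concFn d 0 ν r ≤ r * (Ch * (s / r) * concFn d 0 ν s) := by gcongr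
      _ = Ch * (s * concFn d 0 ν s) := by field_simp
  have h := ge_of_tendsto (hlim.const_mul Ch) hle
  rw [mul_zero] at h
  nlinarith

end
end

section
/- Suppose there are T₄ ∈ (0,∞] and c₄ ∈ [1,∞) such that ψ*(|x|) ≤ c₄ ( ⟨x,Ax⟩ + ∫_{|⟨x,z⟩|<1} |⟨x,z⟩|² ν(dz) ) for all x ∈ ℝ^d with |x| > 1/T₄. Then condition (C3) holds with T₃ = T₄ and with constants c₃ ∈ (0,1] and α₃ ∈ (0,2] depending only on d and c₄. -/
/-!
Write `H(x) = ⟨x, Ax⟩ + ∫ min(1, ⟨x,z⟩²) ν(dz)` and let `N(x)` be the truncated second moment in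
the hypothesis, so that the hypothesis reads `ψ*(|x|) ≤ c₄ N(x)`.

Since `u² ≤ 5 (1 - cos u)` for `|u| < 1`, one has `N ≤ 5 Re ψ` (`truncMoment_le_rePsi`), which
gives the first half of (C3) at once.

For the second half, averaging `Re ψ` over the segment from `0` to `x` gives `H(x) ≤ 20 ψ*(|x|)`
(`truncExp_le_psiStar`), with a constant that does not depend on the dimension. On the other hand
`H` grows along rays at a rate governed by `N`: `t (d/dt) H(tx) = 2 N(tx)`, used in the discrete
form `H(2x) - H(x) ≥ (3/4) N(2x)` (`truncExp_two`). Combined with the hypothesis,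
`N(2x) ≥ ψ*(|2x|) / c₄ ≥ H(2x) / (20 c₄)`, so `H(x) ≤ (1 - δ) H(2x)` with `δ = 3 / (80 c₄)`. As
`2^δ ≤ 1 + δ ≤ 1 / (1 - δ)`, iterating yields `λ^δ H(x) ≤ 4 H(λx)` (`truncExp_scale`). With
`|x| = r` this closes the chain
`λ^δ ψ*(r) ≤ c₄ λ^δ N(x) ≤ c₄ λ^δ H(x) ≤ 4 c₄ H(λx) ≤ 80 c₄ ψ*(λr)`.
-/

open MeasureTheory Filter Set
open scoped RealInnerProductSpace ENNReal Topology

noncomputable section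

/-- The truncated exponent `H(x) = ⟨x, Ax⟩ + ∫ min(1, ⟨x,z⟩²) ν(dz)`. -/
def truncExp (d : ℕ) (A : Ed d →L[ℝ] Ed d) (ν : Measure (Ed d)) (x : Ed d) : ℝ :=
  ⟪x, A x⟫ + ∫ z, min 1 (⟪x, z⟫ ^ 2) ∂ν

/-- The truncated second moment `N(x) = ⟨x, Ax⟩ + ∫_{|⟨x,z⟩|<1} ⟨x,z⟩² ν(dz)`. -/
def truncMoment (d : ℕ) (A : Ed d →L[ℝ] Ed d) (ν : Measure (Ed d)) (x : Ed d) : ℝ :=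
  ⟪x, A x⟫ + ∫ z in {z : Ed d | |⟪x, z⟫| < 1}, ⟪x, z⟫ ^ 2 ∂ν

/-! ### Elementary inequalities -/

lemma one_sub_cos_le (u : ℝ) : 1 - Real.cos u ≤ 2 * min 1 (u ^ 2) := by
  rcases min_cases 1 (u ^ 2) with ⟨h, -⟩ | ⟨h, -⟩ <;> rw [h]
  · linarith [Real.neg_one_le_cos u]
  · nlinarith [Real.one_sub_sq_div_two_le_cos (x := u), sq_nonneg u]

lemma sq_le_one_sub_cos {u : ℝ} (hu : |u| < 1) : u ^ 2 ≤ 5 * (1 - Real.cos u) := by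
  have hpi := Real.pi_gt_three
  have h := Real.cos_le_one_sub_mul_cos_sq (x := u) (by linarith)
  have hpi2 := Real.pi_lt_d2
  have h5 : 1 / 5 ≤ 2 / Real.pi ^ 2 := by
    rw [div_le_div_iff₀ (by norm_num) (by positivity)]
    nlinarith
  nlinarith [mul_le_mul_of_nonneg_right h5 (sq_nonneg u)]

lemma min_one_mul_le {a b K : ℝ} (ha : 0 ≤ a) (hK : 0 ≤ K) (h : b ≤ K * a) :
    min 1 b ≤ (1 + K) * min 1 a := by
  rcases min_cases 1 a with ⟨h1, -⟩ | ⟨h1, -⟩ <;> rw [h1]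
  · linarith [min_le_left 1 b]
  · linarith [min_le_right 1 b]

lemma mul_le_sub_sin {u : ℝ} (hu : 0 < u) : u * min 1 (u ^ 2) ≤ 20 * (u - Real.sin u) := by
  rcases le_or_gt u 1 with h1 | h1
  · have hs := (abs_le.1 (Real.sin_bound (x := u) (by rw [abs_of_pos hu]; exact h1))).2
    rw [abs_of_pos hu] at hs
    have h3 : u ^ 5 ≤ u ^ 3 := pow_le_pow_of_le_one hu.le h1 (by norm_num)
    have h4 : u * min 1 (u ^ 2) ≤ u ^ 3 :=
      (mul_le_mul_of_nonneg_left (min_le_right _ _) hu.le).trans_eq (by ring)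
    have : 0 < u ^ 3 := by positivity
    linarith
  · have h4 : u * min 1 (u ^ 2) ≤ u :=
      (mul_le_mul_of_nonneg_left (min_le_left _ _) hu.le).trans_eq (by ring)
    rcases le_or_gt u (20 / 19) with h2 | h2
    · have hs := (abs_le.1 (Real.sin_bound (x := 1) (by simp))).2
      have hs1 : Real.sin u ≤ Real.sin 1 + (u - 1) := by
        have e : Real.sin u = Real.sin 1 * Real.cos (u - 1) + Real.cos 1 * Real.sin (u - 1) := by
          rw [← Real.sin_add]; ring_nf
        have a1 := Real.sin_le (x := u - 1) (by linarith)
        have a2 : 0 ≤ Real.sin (u - 1) :=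
          Real.sin_nonneg_of_nonneg_of_le_pi (by linarith) (by linarith [Real.pi_gt_three])
        have a3 : 0 ≤ Real.sin 1 :=
          Real.sin_nonneg_of_nonneg_of_le_pi (by linarith) (by linarith [Real.pi_gt_three])
        nlinarith [Real.cos_le_one (u - 1), Real.cos_le_one 1]
      norm_num at hs
      linarith
    · linarith [Real.sin_le_one u]

/-- Averaging `1 - cos (s u)` over `s ∈ [0, 1]` removes the zeros of `1 - cos` away from the
origin. -/
lemma min_le_integral_cos (u : ℝ) :
    min 1 (u ^ 2) ≤ 20 * ∫ s in (0 : ℝ)..1, (1 - Real.cos (s * u)) := by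
  rcases eq_or_ne u 0 with rfl | hu
  · simp
  have hI : ∫ s in (0 : ℝ)..1, (1 - Real.cos (s * u)) = 1 - Real.sin u / u := by
    rw [intervalIntegral.integral_sub (by simp)
      (Continuous.intervalIntegrable (by fun_prop) _ _),
      intervalIntegral.integral_comp_mul_right _ hu]
    simp
    field_simp
  rw [hI]
  have key : ∀ v : ℝ, 0 < v → min 1 (v ^ 2) ≤ 20 * (1 - Real.sin v / v) := by
    intro v hv
    have h := mul_le_sub_sin hv
    have e : v * (20 * (1 - Real.sin v / v)) = 20 * (v - Real.sin v) := by field_simp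
    exact le_of_mul_le_mul_left (h.trans_eq e.symm) hv
  rcases hu.lt_or_gt with h | h
  · simpa using key (-u) (by linarith)
  · exact key u h

lemma min_quarter (u : ℝ) :
    min 1 (u ^ 2) + 3 / 4 * indicator {v : ℝ | |v| < 1} (fun v => v ^ 2) (2 * u)
      ≤ min 1 ((2 * u) ^ 2) := by
  by_cases h : |2 * u| < 1
  · have h2 : (2 * u) ^ 2 < 1 := (sq_lt_one_iff_abs_lt_one _).2 h
    rw [indicator_of_mem (by exact h), min_eq_right h2.le]
    nlinarith [min_le_right 1 (u ^ 2)]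
  · rw [indicator_of_notMem (by exact h)]
    have : u ^ 2 ≤ (2 * u) ^ 2 := by nlinarith [sq_nonneg u]
    simpa using min_le_min_left 1 this

/-! ### Integrability -/

section
variable {d : ℕ} {A : Ed d →L[ℝ] Ed d} {ν : Measure (Ed d)}

lemma min_inner_le (x z : Ed d) :
    min 1 (⟪x, z⟫ ^ 2) ≤ (1 + ‖x‖ ^ 2) * min 1 (‖z‖ ^ 2) := by
  apply min_one_mul_le (by positivity) (by positivity)
  rw [← mul_pow, ← sq_abs]
  exact pow_le_pow_left₀ (abs_nonneg _) (abs_real_inner_le_norm x z) 2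

lemma integrable_min (hL : IsLevyPair d A ν) (x : Ed d) :
    Integrable (fun z : Ed d => min 1 (⟪x, z⟫ ^ 2)) ν := by
  refine (hL.nu_int.const_mul (1 + ‖x‖ ^ 2)).mono' ?_ (ae_of_all _ fun z => ?_)
  · exact (Continuous.aestronglyMeasurable (by fun_prop))
  · rw [Real.norm_of_nonneg (by positivity)]
    exact min_inner_le x z

lemma integrable_cos (hL : IsLevyPair d A ν) (x : Ed d) :
    Integrable (fun z : Ed d => 1 - Real.cos ⟪x, z⟫) ν := by
  refine ((integrable_min hL x).const_mul 2).mono' ?_ (ae_of_all _ fun z => ?_)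
  · exact (Continuous.aestronglyMeasurable (by fun_prop))
  · rw [Real.norm_of_nonneg (by linarith [Real.cos_le_one ⟪x, z⟫])]
    exact one_sub_cos_le _

lemma measurableSet_strip (x : Ed d) : MeasurableSet {z : Ed d | |⟪x, z⟫| < 1} :=
  (isOpen_lt (by fun_prop) continuous_const).measurableSet

lemma indicator_strip_le_min (x z : Ed d) :
    indicator {z : Ed d | |⟪x, z⟫| < 1} (fun z => ⟪x, z⟫ ^ 2) z ≤ min 1 (⟪x, z⟫ ^ 2) := by
  by_cases h : |⟪x, z⟫| < 1
  · rw [indicator_of_mem (by exact h), min_eq_right ((sq_lt_one_iff_abs_lt_one _).2 h).le]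
  · rw [indicator_of_notMem (by exact h)]; positivity

lemma integrable_strip (hL : IsLevyPair d A ν) (x : Ed d) :
    Integrable (indicator {z : Ed d | |⟪x, z⟫| < 1} (fun z => ⟪x, z⟫ ^ 2)) ν := by
  refine (integrable_min hL x).mono' ?_ (ae_of_all _ fun z => ?_)
  · exact (Continuous.aestronglyMeasurable (by fun_prop)).indicator (measurableSet_strip x)
  · rw [Real.norm_of_nonneg (indicator_nonneg (fun _ _ => sq_nonneg _) _)]
    exact indicator_strip_le_min x z

lemma truncMoment_eq (x : Ed d) : truncMoment d A ν x = ⟪x, A x⟫ +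
    ∫ z, indicator {z : Ed d | |⟪x, z⟫| < 1} (fun z => ⟪x, z⟫ ^ 2) z ∂ν := by
  rw [truncMoment, integral_indicator (measurableSet_strip x)]

/-- Fubini below needs this; it holds because `min 1 ‖z‖²` is integrable and positive off the
null set `{0}`. -/
lemma sigmaFinite_levy (hL : IsLevyPair d A ν) : SigmaFinite ν := by
  have hf := hL.nu_int.aefinStronglyMeasurable
  have h0 : ∀ᵐ z ∂ν, z ∈ hf.sigmaFiniteSet := by
    have h1 := (ae_restrict_iff' hf.measurableSet.compl).1 hf.ae_eq_zero_compl
    have h2 : ∀ᵐ z ∂ν, z ∈ ({0} : Set (Ed d))ᶜ := compl_mem_ae_iff.2 hL.nu_zero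
    filter_upwards [h1, h2] with z hz1 hz2
    by_contra hz
    have h3 : min 1 (‖z‖ ^ 2) = 0 := hz1 hz
    have h4 : 0 < ‖z‖ := norm_pos_iff.2 hz2
    have : 0 < min 1 (‖z‖ ^ 2) := by positivity
    linarith
  have h := hf.sigmaFinite_restrict
  rwa [Measure.restrict_eq_self_of_ae_mem h0] at h

/-! ### Comparison of `Re ψ`, `ψ*`, `H` and `N` -/

lemma rePsi_le_truncExp (hL : IsLevyPair d A ν) (x : Ed d) :
    rePsi d A ν x ≤ 2 * truncExp d A ν x := by
  have := integral_mono (integrable_cos hL x) ((integrable_min hL x).const_mul 2)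
    (fun z => one_sub_cos_le ⟪x, z⟫)
  rw [integral_const_mul] at this
  have := hL.nonneg x
  rw [rePsi, truncExp]
  linarith

lemma bddAbove_rePsi (hL : IsLevyPair d A ν) (r : ℝ) :
    BddAbove (rePsi d A ν '' Metric.closedBall 0 r) := by
  refine ⟨2 * (‖A‖ * r ^ 2 + (1 + r ^ 2) * ∫ z, min 1 (‖z‖ ^ 2) ∂ν), ?_⟩
  rintro _ ⟨x, hx, rfl⟩
  have hx' : ‖x‖ ≤ r := by simpa using hx
  have hr : ‖x‖ ^ 2 ≤ r ^ 2 := pow_le_pow_left₀ (norm_nonneg _) hx' 2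
  refine (rePsi_le_truncExp hL x).trans ?_
  have h1 : ⟪x, A x⟫ ≤ ‖A‖ * r ^ 2 := calc
    ⟪x, A x⟫ ≤ ‖x‖ * ‖A x‖ := real_inner_le_norm _ _
    _ ≤ ‖x‖ * (‖A‖ * ‖x‖) := by gcongr; exact A.le_opNorm x
    _ = ‖A‖ * ‖x‖ ^ 2 := by ring
    _ ≤ _ := by gcongr
  have h2 := integral_mono (integrable_min hL x) (hL.nu_int.const_mul (1 + r ^ 2))
    (fun z => (min_inner_le x z).trans
      (mul_le_mul_of_nonneg_right (by linarith) (by positivity)))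
  rw [integral_const_mul] at h2
  rw [truncExp]
  linarith

lemma rePsi_le_psiStar (hL : IsLevyPair d A ν) {x : Ed d} {r : ℝ} (hx : ‖x‖ ≤ r) :
    rePsi d A ν x ≤ psiStar d A ν r :=
  le_csSup (bddAbove_rePsi hL r) ⟨x, by simpa using hx, rfl⟩

lemma truncMoment_le_rePsi (hL : IsLevyPair d A ν) (x : Ed d) :
    truncMoment d A ν x ≤ 5 * rePsi d A ν x := by
  have h := integral_mono (integrable_strip hL x) ((integrable_cos hL x).const_mul 5)
    (fun z => by
      show _ ≤ 5 * (1 - Real.cos ⟪x, z⟫)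
      by_cases h : |⟪x, z⟫| < 1
      · rw [indicator_of_mem (by exact h)]; exact sq_le_one_sub_cos h
      · rw [indicator_of_notMem (by exact h)]; linarith [Real.cos_le_one ⟪x, z⟫])
  rw [integral_const_mul] at h
  have := hL.nonneg x
  rw [truncMoment_eq, rePsi]
  linarith

lemma truncMoment_le_truncExp (hL : IsLevyPair d A ν) (x : Ed d) :
    truncMoment d A ν x ≤ truncExp d A ν x := by
  have h := integral_mono (integrable_strip hL x) (integrable_min hL x)
    (fun z => indicator_strip_le_min x z)
  rw [truncMoment_eq, truncExp]
  linarith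

lemma truncExp_nonneg (hL : IsLevyPair d A ν) (x : Ed d) : 0 ≤ truncExp d A ν x :=
  add_nonneg (hL.nonneg x) (integral_nonneg fun _ => by positivity)

/-- The supremum `ψ*(|x|)` dominates the mean of `Re ψ` over the segment from `0` to `x`, which
is comparable to `H(x)` by Fubini and `min_le_integral_cos`. -/
lemma truncExp_le_psiStar (hL : IsLevyPair d A ν) (x : Ed d) :
    truncExp d A ν x ≤ 20 * psiStar d A ν ‖x‖ := by
  have := sigmaFinite_levy hL
  have hprod : Integrable (Function.uncurry fun (s : ℝ) (z : Ed d) => 1 - Real.cos (s * ⟪x, z⟫))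
      ((volume.restrict (Ioc (0 : ℝ) 1)).prod ν) := by
    have hb : Integrable (fun p : ℝ × Ed d => 4 * min 1 (⟪x, p.2⟫ ^ 2))
        ((volume.restrict (Ioc (0 : ℝ) 1)).prod ν) :=
      ((integrable_min hL x).comp_snd _).const_mul 4
    refine hb.mono' (Continuous.aestronglyMeasurable ?_) ?_
    · simp only [Function.uncurry_def]; fun_prop
    have hs : ∀ᵐ p : ℝ × Ed d ∂((volume.restrict (Ioc (0 : ℝ) 1)).prod ν), p.1 ∈ Ioc (0 : ℝ) 1 :=
      Measure.quasiMeasurePreserving_fst.ae (ae_restrict_mem measurableSet_Ioc)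
    filter_upwards [hs] with p hp
    simp only [Function.uncurry_def]
    rw [Real.norm_of_nonneg (by linarith [Real.cos_le_one (p.1 * ⟪x, p.2⟫)])]
    refine (one_sub_cos_le _).trans ?_
    have h2 : min 1 ((p.1 * ⟪x, p.2⟫) ^ 2) ≤ (1 + 1) * min 1 (⟪x, p.2⟫ ^ 2) := by
      apply min_one_mul_le (sq_nonneg _) zero_le_one
      rw [mul_pow]
      exact mul_le_mul_of_nonneg_right (pow_le_one₀ hp.1.le hp.2) (sq_nonneg _)
    linarith
  have hswap := integral_integral_swap hprod
  have hleft : Integrable (fun s : ℝ => ∫ z, (1 - Real.cos (s * ⟪x, z⟫)) ∂ν)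
      (volume.restrict (Ioc (0 : ℝ) 1)) := hprod.integral_prod_left
  have hright : Integrable (fun z : Ed d => ∫ s in Ioc (0 : ℝ) 1, (1 - Real.cos (s * ⟪x, z⟫))) ν :=
    hprod.integral_prod_right
  have hlow : ∫ z, min 1 (⟪x, z⟫ ^ 2) ∂ν ≤
      20 * ∫ z, (∫ s in Ioc (0 : ℝ) 1, (1 - Real.cos (s * ⟪x, z⟫))) ∂ν := by
    rw [← integral_const_mul]
    refine integral_mono (integrable_min hL x) (hright.const_mul 20) fun z => ?_
    have := min_le_integral_cos ⟪x, z⟫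
    rwa [intervalIntegral.integral_of_le zero_le_one] at this
  have hsq : IntegrableOn (fun s : ℝ => s ^ 2 * ⟪x, A x⟫) (Ioc 0 1) :=
    (Continuous.integrableOn_Icc (by fun_prop)).mono_set Ioc_subset_Icc_self
  have hsq' : ∫ s in Ioc (0 : ℝ) 1, s ^ 2 * ⟪x, A x⟫ = ⟪x, A x⟫ / 3 := by
    rw [← intervalIntegral.integral_of_le zero_le_one, intervalIntegral.integral_mul_const,
      integral_pow]
    norm_num
    ring
  have hup : ∫ s in Ioc (0 : ℝ) 1, (s ^ 2 * ⟪x, A x⟫ + ∫ z, (1 - Real.cos (s * ⟪x, z⟫)) ∂ν) ≤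
      ∫ s in Ioc (0 : ℝ) 1, psiStar d A ν ‖x‖ := by
    refine setIntegral_mono_on (hsq.add hleft) (by simp) measurableSet_Ioc fun s hs => ?_
    have hn : ‖s • x‖ ≤ ‖x‖ := by
      rw [norm_smul, Real.norm_of_nonneg hs.1.le]
      exact mul_le_of_le_one_left (norm_nonneg _) hs.2
    refine le_trans (le_of_eq ?_) (rePsi_le_psiStar hL hn)
    simp only [rePsi, map_smul, inner_smul_left, inner_smul_right, RCLike.conj_to_real]
    ring
  rw [integral_add hsq hleft, hsq', hswap] at hup
  simp only [integral_const, measureReal_restrict_apply_univ, Real.volume_real_Ioc, sub_zero,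
    zero_le_one, sup_of_le_left, smul_eq_mul, one_mul] at hup
  have := hL.nonneg x
  rw [truncExp]
  linarith

/-! ### Growth of `H` along rays -/

lemma truncExp_mono (hL : IsLevyPair d A ν) (x : Ed d) {l : ℝ} (hl : 1 ≤ l) :
    truncExp d A ν x ≤ truncExp d A ν (l • x) := by
  have hl2 : 1 ≤ l ^ 2 := one_le_pow₀ hl
  refine add_le_add ?_ (integral_mono (integrable_min hL x) (integrable_min hL _) fun z => ?_)
  · simp only [map_smul, inner_smul_left, inner_smul_right, RCLike.conj_to_real]
    nlinarith [hL.nonneg x]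
  · simp only [inner_smul_left, RCLike.conj_to_real]
    apply min_le_min_left
    nlinarith [sq_nonneg ⟪x, z⟫]

/-- Discrete form of the differential identity `t (d/dt) H(tx) = 2 N(tx)`. -/
lemma truncExp_two (hL : IsLevyPair d A ν) (x : Ed d) :
    truncExp d A ν x + 3 / 4 * truncMoment d A ν ((2 : ℝ) • x) ≤ truncExp d A ν ((2 : ℝ) • x) := by
  have h := integral_mono
    ((integrable_min hL x).add ((integrable_strip hL ((2 : ℝ) • x)).const_mul (3 / 4)))
    (integrable_min hL ((2 : ℝ) • x)) (fun z => by
      have := min_quarter ⟪x, z⟫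
      simp only [Pi.add_apply, indicator, mem_ofPred_eq, inner_smul_left,
        RCLike.conj_to_real] at this ⊢
      exact this)
  simp only [Pi.add_apply] at h
  rw [integral_add (integrable_min hL x) ((integrable_strip hL _).const_mul _),
    integral_const_mul] at h
  rw [truncMoment_eq, truncExp, truncExp]
  have e : ⟪(2 : ℝ) • x, A ((2 : ℝ) • x)⟫ = 4 * ⟪x, A x⟫ := by
    simp only [map_smul, inner_smul_left, inner_smul_right, RCLike.conj_to_real]
    ring
  rw [e]
  linarith

lemma lt_ofReal_norm_smul {t : ℝ≥0∞} {x : Ed d} (hx : t < ENNReal.ofReal ‖x‖) {l : ℝ}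
    (hl : 1 ≤ l) : t < ENNReal.ofReal ‖l • x‖ := by
  refine hx.trans_le (ENNReal.ofReal_le_ofReal ?_)
  rw [norm_smul, Real.norm_of_nonneg (by linarith)]
  exact le_mul_of_one_le_left (norm_nonneg _) hl

variable {c δ : ℝ} {t : ℝ≥0∞}

lemma truncExp_pow (hL : IsLevyPair d A ν) (hc : 1 ≤ c) (hδ : δ = 3 / (80 * c))
    (H : ∀ x : Ed d, t < ENNReal.ofReal ‖x‖ → psiStar d A ν ‖x‖ ≤ c * truncMoment d A ν x)
    {x : Ed d} (hx : t < ENNReal.ofReal ‖x‖) (n : ℕ) :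
    ((2 : ℝ) ^ δ) ^ n * truncExp d A ν x ≤ truncExp d A ν ((2 : ℝ) ^ n • x) := by
  have hδ0 : 0 < δ := by rw [hδ]; positivity
  have hδ1 : δ ≤ 1 := by rw [hδ, div_le_one (by positivity)]; linarith
  have h2 : (2 : ℝ) ^ δ ≤ 1 + δ := by
    have := rpow_one_add_le_one_add_mul_self (s := 1) (by norm_num) hδ0.le hδ1
    norm_num at this
    exact this
  induction n with
  | zero => simp
  | succ n ih =>
    set y := (2 : ℝ) ^ n • x with hy
    have hyx : (2 : ℝ) ^ (n + 1) • x = (2 : ℝ) • y := by rw [hy, smul_smul, pow_succ']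
    rw [hyx]
    have hyt : t < ENNReal.ofReal ‖(2 : ℝ) • y‖ := by
      rw [← hyx]; exact lt_ofReal_norm_smul hx (one_le_pow₀ (by norm_num))
    have a1 := H _ hyt
    have a2 := truncExp_le_psiStar hL ((2 : ℝ) • y)
    have a3 := truncExp_two hL y
    have hcd : δ * c = 3 / 80 := by rw [hδ]; field_simp
    -- `δ` is chosen so that `δ H(2y) ≤ (3/4) N(2y)`, hence `H(y) ≤ (1 - δ) H(2y)`.
    have a4 : δ * truncExp d A ν ((2 : ℝ) • y) ≤ 3 / 4 * truncMoment d A ν ((2 : ℝ) • y) := by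
      have b1 : truncExp d A ν ((2 : ℝ) • y) ≤ 20 * (c * truncMoment d A ν ((2 : ℝ) • y)) := by
        linarith
      have b2 := mul_le_mul_of_nonneg_left b1 hδ0.le
      linear_combination b2 + 20 * truncMoment d A ν ((2 : ℝ) • y) * hcd
    have p1 := truncExp_nonneg hL ((2 : ℝ) • y)
    have p2 := truncExp_nonneg hL y
    calc ((2 : ℝ) ^ δ) ^ (n + 1) * truncExp d A ν x
        = (2 : ℝ) ^ δ * (((2 : ℝ) ^ δ) ^ n * truncExp d A ν x) := by ring
      _ ≤ (1 + δ) * truncExp d A ν y := mul_le_mul h2 ih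
          (mul_nonneg (by positivity) (truncExp_nonneg hL x)) (by positivity)
      _ ≤ (1 + δ) * ((1 - δ) * truncExp d A ν ((2 : ℝ) • y)) := by gcongr; linarith
      _ ≤ truncExp d A ν ((2 : ℝ) • y) := by nlinarith [mul_nonneg (sq_nonneg δ) p1]

lemma truncExp_scale (hL : IsLevyPair d A ν) (hc : 1 ≤ c) (hδ : δ = 3 / (80 * c))
    (H : ∀ x : Ed d, t < ENNReal.ofReal ‖x‖ → psiStar d A ν ‖x‖ ≤ c * truncMoment d A ν x)
    {x : Ed d} (hx : t < ENNReal.ofReal ‖x‖) {l : ℝ} (hl : 1 ≤ l) :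
    l ^ δ * truncExp d A ν x ≤ 4 * truncExp d A ν (l • x) := by
  have hδ0 : 0 < δ := by rw [hδ]; positivity
  have hδ1 : δ ≤ 2 := by rw [hδ, div_le_iff₀ (by positivity)]; linarith
  obtain ⟨n, hn1, hn2⟩ := exists_nat_pow_near hl (one_lt_two : (1 : ℝ) < 2)
  have h1 : l ^ δ ≤ 4 * ((2 : ℝ) ^ δ) ^ n := calc
    l ^ δ ≤ ((2 : ℝ) ^ (n + 1)) ^ δ := Real.rpow_le_rpow (by linarith) hn2.le hδ0.le
    _ = (2 : ℝ) ^ δ * ((2 : ℝ) ^ δ) ^ n := by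
      rw [← Real.rpow_natCast, ← Real.rpow_mul two_pos.le, mul_comm, Real.rpow_mul two_pos.le,
        Real.rpow_natCast, pow_succ']
    _ ≤ _ := by
      gcongr
      calc (2 : ℝ) ^ δ ≤ (2 : ℝ) ^ (2 : ℝ) := Real.rpow_le_rpow_of_exponent_le one_le_two hδ1
        _ = 4 := by norm_num
  have h2 : truncExp d A ν ((2 : ℝ) ^ n • x) ≤ truncExp d A ν (l • x) := by
    have h2n : (0 : ℝ) < 2 ^ n := by positivity
    have := truncExp_mono hL ((2 : ℝ) ^ n • x) (l := l / 2 ^ n) ((one_le_div h2n).2 hn1)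
    rwa [smul_smul, div_mul_cancel₀ _ h2n.ne'] at this
  have h3 := truncExp_pow hL hc hδ H hx n
  have h4 := mul_le_mul_of_nonneg_right h1 (truncExp_nonneg hL x)
  linarith

end

theorem stmt_10 (d : ℕ) (hd : 1 ≤ d) (c4 : ℝ) (hc4 : 1 ≤ c4) :
    ∃ c3 α3 : ℝ, 0 < c3 ∧ c3 ≤ 1 ∧ 0 < α3 ∧ α3 ≤ 2 ∧
      ∀ (A : Ed d →L[ℝ] Ed d) (ν : Measure (Ed d)) (T4 : ℝ≥0∞),
        IsLevyPair d A ν → 0 < T4 →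
        (∀ x : Ed d, 1 / T4 < ENNReal.ofReal ‖x‖ →
          psiStar d A ν ‖x‖ ≤
            c4 * (⟪x, A x⟫ +
              ∫ z in {z : Ed d | |⟪x, z⟫| < 1}, ⟪x, z⟫ ^ 2 ∂ν)) →
        CondC3 d A ν T4 c3 α3 := by
  have hc0 : 0 < c4 := by linarith
  have hc3 : 1 / (80 * c4) ≤ 1 := by rw [div_le_one (by positivity)]; linarith
  have hα : 3 / (80 * c4) ≤ 2 := by rw [div_le_iff₀ (by positivity)]; linarith
  refine ⟨1 / (80 * c4), 3 / (80 * c4), by positivity, hc3, by positivity, hα, ?_⟩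
  intro A ν T hL _ H
  have H' : ∀ x : Ed d, 1 / T < ENNReal.ofReal ‖x‖ →
      psiStar d A ν ‖x‖ ≤ c4 * truncMoment d A ν x := H
  have hdiv : ∀ {a b : ℝ}, a ≤ 80 * c4 * b → 1 / (80 * c4) * a ≤ b := by
    intro a b h
    rw [one_div, inv_mul_le_iff₀ (by positivity)]
    exact h
  refine ⟨fun x hx => hdiv ?_, fun l r hl hr hrT => ?_⟩
  · have h1 := mul_le_mul_of_nonneg_left (truncMoment_le_rePsi hL x) hc0.le
    have h0 : 0 ≤ rePsi d A ν x := add_nonneg (hL.nonneg x)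
      (integral_nonneg fun z => by simpa using Real.cos_le_one ⟪x, z⟫)
    nlinarith [H' x hx, mul_nonneg hc0.le h0]
  · obtain ⟨x, hx⟩ : ∃ x : Ed d, ‖x‖ = r :=
      ⟨EuclideanSpace.single ⟨0, hd⟩ r, by simp [abs_of_pos hr]⟩
    rw [← hx] at hrT
    have h1 := H' x hrT
    have h2 := truncMoment_le_truncExp hL x
    have h3 := truncExp_scale hL hc4 rfl H' hrT hl
    have h4 := truncExp_le_psiStar hL (l • x)
    rw [norm_smul, Real.norm_of_nonneg (by linarith), hx] at h4
    rw [hx] at h1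
    rw [mul_assoc]
    apply hdiv
    set p := l ^ (3 / (80 * c4)) with hp
    have hp0 : 0 ≤ p := by positivity
    calc p * psiStar d A ν r ≤ p * (c4 * truncExp d A ν x) := by
          gcongr; exact h1.trans (by gcongr)
      _ = c4 * (p * truncExp d A ν x) := by ring
      _ ≤ c4 * (4 * (20 * psiStar d A ν (l * r))) := by
          exact mul_le_mul_of_nonneg_left (h3.trans (by gcongr)) hc0.le
      _ = 80 * c4 * psiStar d A ν (l * r) := by ring

end
end
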